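/- Let j ≤ K be natural numbers and let ε be a real number with 0 < ε ≤ 1. Let x_j, …, x_K, f_j, …, f_K and y_K be nonnegative real numbers satisfying y_K + f_K = x_K, and suppose that for every i with j ≤ i ≤ K−1 we have 2·x_{i+1} + f_i ≥ (1 − ε/(13·2^{i/2}))·x_i. Then 2^{K−j}·y_K + ∑_{i=j}^{K} 2^{i−j}·f_i ≥ (1 − (ε/3)·2^{−j/2})·x_j. -/

import Mathlib

/-!
Put `δ i = ε / (13 * √2 ^ i)` and `V n = 2 ^ (n - j) * x n + ∑ i ∈ Ico j n, 2 ^ (i - j) * f i`, so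
that `V j = x j` and `V K` is the left-hand side. Then `V (n + 1) ≥ (1 - δ n) * V n`. If the sum
of the `δ i` is at most `1`, the Weierstrass product inequality gives
`V K ≥ (1 - ∑ i ∈ Ico j K, δ i) * x j`; otherwise this bound holds because `V K` is nonnegative.
The geometric sum of the `δ i` is at most `(2 + √2) / 13 * ε / √2 ^ j`, and `(2 + √2) / 13 ≤ 1 / 3`.
-/

open Finset

section Telescoping

variable {R : Type*} [CommRing R] [LinearOrder R] [IsStrictOrderedRing R]

theorem one_sub_sum_le_prod_one_sub {ι : Type*} {s : Finset ι} {δ : ι → R}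
    (hδ₀ : ∀ i ∈ s, 0 ≤ δ i) (hδ₁ : ∀ i ∈ s, δ i ≤ 1) :
    1 - ∑ i ∈ s, δ i ≤ ∏ i ∈ s, (1 - δ i) := by
  induction s using Finset.cons_induction with
  | empty => simp
  | cons k s hk ih =>
    rw [forall_mem_cons] at hδ₀ hδ₁
    have hprod : ∏ i ∈ s, (1 - δ i) ≤ 1 :=
      prod_le_one (fun i hi ↦ sub_nonneg.2 (hδ₁.2 i hi)) fun i hi ↦ sub_le_self 1 (hδ₀.2 i hi)
    rw [sum_cons, prod_cons]
    linarith [ih hδ₀.2 hδ₁.2, mul_le_of_le_one_right hδ₀.1 hprod]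

variable {r : R} {j K : ℕ} {x f : ℕ → R}

theorem prod_mul_le_pow_mul_add_sum {a : ℕ → R} (hr : 0 ≤ r) (hjK : j ≤ K)
    (ha₀ : ∀ i ∈ Ico j K, 0 ≤ a i) (ha₁ : ∀ i ∈ Ico j K, a i ≤ 1)
    (hf : ∀ i ∈ Ico j K, 0 ≤ f i)
    (hstep : ∀ i ∈ Ico j K, a i * x i ≤ r * x (i + 1) + f i) :
    (∏ i ∈ Ico j K, a i) * x j ≤ r ^ (K - j) * x K + ∑ i ∈ Ico j K, r ^ (i - j) * f i := by
  induction K, hjK using Nat.le_induction with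
  | base => simp
  | succ K hjK ih =>
    have hK : K ∈ Ico j (K + 1) := by simp [hjK]
    have hsub : Ico j K ⊆ Ico j (K + 1) := Ico_subset_Ico_right K.le_succ
    have ih := ih (fun i hi ↦ ha₀ i (hsub hi)) (fun i hi ↦ ha₁ i (hsub hi))
      (fun i hi ↦ hf i (hsub hi)) (fun i hi ↦ hstep i (hsub hi))
    have hsum : 0 ≤ ∑ i ∈ Ico j K, r ^ (i - j) * f i :=
      sum_nonneg fun i hi ↦ mul_nonneg (pow_nonneg hr _) (hf i (hsub hi))
    calc (∏ i ∈ Ico j (K + 1), a i) * x j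
        = a K * ((∏ i ∈ Ico j K, a i) * x j) := by rw [prod_Ico_succ_top hjK]; ring
      _ ≤ a K * (r ^ (K - j) * x K + ∑ i ∈ Ico j K, r ^ (i - j) * f i) :=
          mul_le_mul_of_nonneg_left ih (ha₀ K hK)
      _ = r ^ (K - j) * (a K * x K) + a K * ∑ i ∈ Ico j K, r ^ (i - j) * f i := by ring
      _ ≤ r ^ (K - j) * (r * x (K + 1) + f K) + ∑ i ∈ Ico j K, r ^ (i - j) * f i :=
          add_le_add (mul_le_mul_of_nonneg_left (hstep K hK) (pow_nonneg hr _))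
            (mul_le_of_le_one_left hsum (ha₁ K hK))
      _ = r ^ (K + 1 - j) * x (K + 1) + ∑ i ∈ Ico j (K + 1), r ^ (i - j) * f i := by
          rw [sum_Ico_succ_top hjK, Nat.succ_sub hjK, pow_succ]; ring

theorem one_sub_sum_mul_le_pow_mul_add_sum {δ : ℕ → R} (hr : 0 ≤ r) (hjK : j ≤ K)
    (hδ : ∀ i ∈ Ico j K, 0 ≤ δ i) (hxj : 0 ≤ x j) (hxK : 0 ≤ x K)
    (hf : ∀ i ∈ Ico j K, 0 ≤ f i)
    (hstep : ∀ i ∈ Ico j K, (1 - δ i) * x i ≤ r * x (i + 1) + f i) :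
    (1 - ∑ i ∈ Ico j K, δ i) * x j ≤
      r ^ (K - j) * x K + ∑ i ∈ Ico j K, r ^ (i - j) * f i := by
  rcases le_total (∑ i ∈ Ico j K, δ i) 1 with hle | hge
  · have hδ₁ : ∀ i ∈ Ico j K, δ i ≤ 1 := fun i hi ↦ (single_le_sum hδ hi).trans hle
    exact (mul_le_mul_of_nonneg_right (one_sub_sum_le_prod_one_sub hδ hδ₁) hxj).trans <|
      prod_mul_le_pow_mul_add_sum hr hjK (fun i hi ↦ sub_nonneg.2 (hδ₁ i hi))
        (fun i hi ↦ sub_le_self 1 (hδ i hi)) hf hstep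
  · exact (mul_nonpos_of_nonpos_of_nonneg (sub_nonpos.2 hge) hxj).trans <|
      add_nonneg (mul_nonneg (pow_nonneg hr _) hxK) <|
        sum_nonneg fun i hi ↦ mul_nonneg (pow_nonneg hr _) (hf i hi)

end Telescoping

theorem sum_Ico_inv_sqrt_two_pow_le (m n : ℕ) :
    ∑ i ∈ Ico m n, (√2)⁻¹ ^ i ≤ (2 + √2) / √2 ^ m := by
  have hinv : (1 - (√2)⁻¹)⁻¹ = 2 + √2 := by grind
  calc ∑ i ∈ Ico m n, (√2)⁻¹ ^ i
      ≤ (√2)⁻¹ ^ m / (1 - (√2)⁻¹) :=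
        geom_sum_Ico_le_of_lt_one (by positivity) (inv_lt_one_of_one_lt₀ Real.one_lt_sqrt_two)
    _ = (2 + √2) / √2 ^ m := by rw [div_eq_mul_inv, hinv, inv_pow, mul_comm, div_eq_mul_inv]

theorem sum_Ico_div_sqrt_two_pow_le {ε : ℝ} (hε : 0 ≤ ε) (m n : ℕ) :
    ∑ i ∈ Ico m n, ε / (13 * √2 ^ i) ≤ ε / 3 / √2 ^ m := by
  have hconst : (2 + √2) / 13 ≤ 1 / 3 := by linarith [Real.sqrt_two_lt_three_halves]
  calc ∑ i ∈ Ico m n, ε / (13 * √2 ^ i)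
      = ε / 13 * ∑ i ∈ Ico m n, (√2)⁻¹ ^ i := by
        rw [mul_sum]
        exact sum_congr rfl fun i _ ↦ by rw [inv_pow, ← div_eq_mul_inv, div_div]
    _ ≤ ε / 13 * ((2 + √2) / √2 ^ m) := by
        gcongr
        exact sum_Ico_inv_sqrt_two_pow_le m n
    _ = ε * ((2 + √2) / 13) / √2 ^ m := by ring
    _ ≤ ε * (1 / 3) / √2 ^ m := by gcongr ε * ?_ / √2 ^ m
    _ = ε / 3 / √2 ^ m := by rw [mul_one_div]

theorem telescoping_lower_bound_general {j K : ℕ} (hjK : j ≤ K) {ε : ℝ} (hε : 0 ≤ ε)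
    {x f : ℕ → ℝ} {y : ℝ} (hxj : 0 ≤ x j) (hxK : 0 ≤ x K)
    (hf : ∀ i, j ≤ i → i < K → 0 ≤ f i) (hsum : y + f K = x K)
    (hstep : ∀ i, j ≤ i → i < K →
      2 * x (i + 1) + f i ≥ (1 - ε / (13 * Real.sqrt 2 ^ i)) * x i) :
    (2 : ℝ) ^ (K - j) * y + ∑ i ∈ Finset.Icc j K, (2 : ℝ) ^ (i - j) * f i ≥
      (1 - (ε / 3) / Real.sqrt 2 ^ j) * x j := by
  simp only [← and_imp, ← mem_Ico] at hf hstep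
  calc (1 - ε / 3 / √2 ^ j) * x j
      ≤ (1 - ∑ i ∈ Ico j K, ε / (13 * √2 ^ i)) * x j := by
        gcongr
        exact sum_Ico_div_sqrt_two_pow_le hε j K
    _ ≤ 2 ^ (K - j) * x K + ∑ i ∈ Ico j K, 2 ^ (i - j) * f i :=
        one_sub_sum_mul_le_pow_mul_add_sum zero_le_two hjK (fun i _ ↦ by positivity)
          hxj hxK hf hstep
    _ = 2 ^ (K - j) * y + ∑ i ∈ Icc j K, 2 ^ (i - j) * f i := by
        rw [← hsum, ← sum_Ico_add_eq_sum_Icc hjK]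
        ring

theorem telescoping_lower_bound (j K : ℕ) (hjK : j ≤ K) (ε : ℝ) (hε0 : 0 < ε) (hε1 : ε ≤ 1)
    (x f : ℕ → ℝ) (y : ℝ)
    (hx : ∀ i, j ≤ i → i ≤ K → 0 ≤ x i)
    (hf : ∀ i, j ≤ i → i ≤ K → 0 ≤ f i)
    (hy : 0 ≤ y)
    (hsum : y + f K = x K)
    (hstep : ∀ i, j ≤ i → i < K →
      2 * x (i + 1) + f i ≥ (1 - ε / (13 * Real.sqrt 2 ^ i)) * x i) :
    (2 : ℝ) ^ (K - j) * y + ∑ i ∈ Finset.Icc j K, (2 : ℝ) ^ (i - j) * f i ≥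
      (1 - (ε / 3) / Real.sqrt 2 ^ j) * x j :=
  telescoping_lower_bound_general hjK hε0.le (hx j le_rfl hjK) (hx K hjK le_rfl)
    (fun i hji hiK ↦ hf i hji hiK.le) hsum hstep
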